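/- arXiv:1404.0614 — 7 statements merged into one kernel-verified Lean document; each statement's English description precedes it below -/
import Mathlib

section
/- Consider the returning secretary problem with n ≥ 1 secretaries under the no-waiting rule. The probability (over the uniformly random arrival order of the 2n arrivals) that the algorithm hires the best secretary is exactly (2n+1)/(3n). -/
/-!
Write `E j` for the event that both arrivals of `j` precede every arrival of the better secretaries
`0, …, j - 1`. The algorithm wins iff no `E j` with `j ≠ 0` occurs (`noWaitWins_iff`). Since `E j`
only says that the first two arrivals among `0, …, j` are those of `j`, it has probability
`2 / ((2j+2)(2j+1))` and is independent of the relative order of the arrivals of `0, …, j - 1`.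
Hence the probability of winning is the telescoping product
`∏_{j=1}^{n-1} j(2j+3) / ((j+1)(2j+1)) = (2n+1) / (3n)`.

The independence is made concrete by inserting the two arrivals of the worst secretary `n`
into an arrival order `τ` of `0, …, n - 1`: every arrival order of `n + 1` secretaries is obtained
exactly once (`insertWorst_bijective`), and the new order is winning iff `τ` is and the new
arrivals do not take the first two places (`noWaitWins_insertWorst`). Exactly two of the
`(2n+2)(2n+1)` insertions are excluded, which gives a recursion for the number of winning orders.
-/

/-- The position of the first arrival of secretary `j`, when the arrival order is given by
`σ : Fin (2*n) ≃ Fin n × Fin 2` (mapping each of the `2*n` arrival positions to the pair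
(secretary, copy of the arrival)). -/
def firstArrival (n : ℕ) (σ : Fin (2 * n) ≃ Fin n × Fin 2) (j : Fin n) : Fin (2 * n) :=
  min (σ.symm (j, 0)) (σ.symm (j, 1))

/-- The position of the second arrival of secretary `j`. -/
def secondArrival (n : ℕ) (σ : Fin (2 * n) ≃ Fin n × Fin 2) (j : Fin n) : Fin (2 * n) :=
  max (σ.symm (j, 0)) (σ.symm (j, 1))

/-- The no-waiting algorithm wins: secretaries are ranked by their index (index `0`, the
best secretary, is the smallest).  The algorithm hires the best secretary iff for every
secretary `j` other than the best one it is *not* the case that `j`'s second arrival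
precedes the best secretary's first arrival while `j` is the best among all secretaries
that have had an arrival up to that moment. -/
def NoWaitWins (n : ℕ) (hn : 0 < n) (σ : Fin (2 * n) ≃ Fin n × Fin 2) : Prop :=
  ∀ j : Fin n, j ≠ ⟨0, hn⟩ →
    ¬ (secondArrival n σ j < firstArrival n σ ⟨0, hn⟩ ∧
        ∀ i : Fin n, firstArrival n σ i ≤ secondArrival n σ j → j ≤ i)

/-- The algorithm wins iff each `j ≠ 0` is preceded, at the latest just before its second arrival,
by a better secretary. -/
theorem noWaitWins_iff (n : ℕ) (hn : 0 < n) (σ : Fin (2 * n) ≃ Fin n × Fin 2) :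
    NoWaitWins n hn σ ↔ ∀ j : Fin n, j ≠ ⟨0, hn⟩ →
      ∃ i : Fin n, i < j ∧ firstArrival n σ i ≤ secondArrival n σ j := by
  unfold NoWaitWins
  refine forall_congr' fun j => imp_congr_right fun hj => ?_
  have h0 : (⟨0, hn⟩ : Fin n) < j := by
    rw [Fin.lt_def]
    have : (j : ℕ) ≠ 0 := fun h => hj (Fin.ext h)
    simp only
    omega
  constructor
  · intro h
    by_contra! hc
    exact h ⟨hc _ h0, fun i hi => not_lt.1 fun hij => absurd (hc i hij) (not_lt.2 hi)⟩
  · rintro ⟨i, hij, hi⟩ ⟨-, h⟩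
    exact absurd (h i hi) (not_le.2 hij)

/-- The positions of the arrivals after the two arrivals of secretary `n` have been inserted into
the arrival order `τ`: copy `0` goes to position `p`, and copy `1` to position `q` among the
positions other than `p`. The other arrivals keep their relative order. -/
def insertPos (n : ℕ) (p : Fin (2 * n + 2)) (q : Fin (2 * n + 1))
    (τ : Fin (2 * n) ≃ Fin n × Fin 2) (x : Fin (n + 1) × Fin 2) : Fin (2 * n + 2) :=
  Fin.lastCases (motive := fun _ => Fin (2 * n + 2)) (if x.2 = 0 then p else p.succAbove q)
    (fun j => p.succAbove (q.succAbove (τ.symm (j, x.2)))) x.1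

theorem insertPos_last_zero (n : ℕ) (p q τ) : insertPos n p q τ (Fin.last n, 0) = p := by
  simp [insertPos]

theorem insertPos_last_one (n : ℕ) (p q τ) :
    insertPos n p q τ (Fin.last n, 1) = p.succAbove q := by
  simp [insertPos]

theorem insertPos_castSucc (n : ℕ) (p q τ) (j : Fin n) (c : Fin 2) :
    insertPos n p q τ (j.castSucc, c) = p.succAbove (q.succAbove (τ.symm (j, c))) := by
  simp [insertPos]

theorem insertPos_injective (n : ℕ) (p q τ) : Function.Injective (insertPos n p q τ) := by
  have key : ∀ j c d, insertPos n p q τ (Fin.castSucc j, c) ≠ insertPos n p q τ (Fin.last n, d) := by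
    intro j c d
    rw [insertPos_castSucc]
    fin_cases d
    · simp [insertPos_last_zero]
    · simp [insertPos_last_one]
  rintro ⟨i, c⟩ ⟨j, d⟩ h
  induction i using Fin.lastCases with
  | last =>
    induction j using Fin.lastCases with
    | last =>
      fin_cases c <;> fin_cases d <;>
        simp [insertPos_last_zero, insertPos_last_one, Fin.succAbove_ne, Fin.ne_succAbove] at h ⊢
    | cast j => exact absurd h.symm (key _ _ _)
  | cast i =>
    induction j using Fin.lastCases with
    | last => exact absurd h (key _ _ _)
    | cast j =>
      rw [insertPos_castSucc, insertPos_castSucc] at h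
      have := τ.symm.injective (Fin.succAbove_right_injective (Fin.succAbove_right_injective h))
      simp only [Prod.mk.injEq] at this ⊢
      simp [this]

/-- The arrival order of `n + 1` secretaries whose positions are given by `insertPos`. -/
noncomputable def insertWorst (n : ℕ)
    (x : (Fin (2 * n + 2) × Fin (2 * n + 1)) × (Fin (2 * n) ≃ Fin n × Fin 2)) :
    Fin (2 * (n + 1)) ≃ Fin (n + 1) × Fin 2 :=
  (Equiv.ofBijective (insertPos n x.1.1 x.1.2 x.2)
    ((Fintype.bijective_iff_injective_and_card _).2
      ⟨insertPos_injective _ _ _ _, by simp; ring⟩)).symm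

theorem insertWorst_symm (n x y) :
    (insertWorst n x).symm y = insertPos n x.1.1 x.1.2 x.2 y := rfl

theorem card_orders (n : ℕ) : Fintype.card (Fin (2 * n) ≃ Fin n × Fin 2) = (2 * n).factorial := by
  rw [Fintype.card_equiv (Fintype.equivOfCardEq (by simp; ring)), Fintype.card_fin]

theorem insertWorst_bijective (n : ℕ) : Function.Bijective (insertWorst n) := by
  refine (Fintype.bijective_iff_injective_and_card _).2 ⟨?_, ?_⟩
  · rintro ⟨⟨p, q⟩, τ⟩ ⟨⟨p', q'⟩, τ'⟩ h
    have h' : ∀ y, insertPos n p q τ y = insertPos n p' q' τ' y := fun y => by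
      simpa only [insertWorst_symm] using congrArg (fun e => e.symm y) h
    have hp := h' (Fin.last n, 0)
    simp only [insertPos_last_zero] at hp
    subst hp
    have hq := h' (Fin.last n, 1)
    simp only [insertPos_last_one] at hq
    have hq := Fin.succAbove_right_injective hq
    subst hq
    have hτ : τ.symm = τ'.symm := by
      ext1 ⟨j, c⟩
      have := h' (j.castSucc, c)
      simp only [insertPos_castSucc] at this
      exact Fin.succAbove_right_injective (Fin.succAbove_right_injective this)
    have : τ = τ' := by simpa using congrArg Equiv.symm hτ
    rw [this]
  · rw [Fintype.card_prod, Fintype.card_prod, card_orders, card_orders, Fintype.card_fin,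
      Fintype.card_fin, show 2 * (n + 1) = 2 * n + 1 + 1 by ring, Nat.factorial_succ, Nat.factorial_succ]
    ring

theorem firstArrival_insertWorst (n p q τ) (j : Fin n) :
    firstArrival (n + 1) (insertWorst n ((p, q), τ)) j.castSucc =
      p.succAbove (q.succAbove (firstArrival n τ j)) := by
  simp only [firstArrival, insertWorst_symm, insertPos_castSucc]
  rw [(Fin.strictMono_succAbove q).monotone.map_min, (Fin.strictMono_succAbove p).monotone.map_min]

theorem secondArrival_insertWorst (n p q τ) (j : Fin n) :
    secondArrival (n + 1) (insertWorst n ((p, q), τ)) j.castSucc =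
      p.succAbove (q.succAbove (secondArrival n τ j)) := by
  simp only [secondArrival, insertWorst_symm, insertPos_castSucc]
  rw [(Fin.strictMono_succAbove q).monotone.map_max, (Fin.strictMono_succAbove p).monotone.map_max]

theorem secondArrival_insertWorst_last (n p q τ) :
    secondArrival (n + 1) (insertWorst n ((p, q), τ)) (Fin.last n) = max p (p.succAbove q) := by
  simp only [secondArrival, insertWorst_symm, insertPos_last_zero, insertPos_last_one]

theorem exists_firstArrival_eq_zero (n : ℕ) (hn : 0 < n) (τ : Fin (2 * n) ≃ Fin n × Fin 2) :
    ∃ j, firstArrival n τ j = ⟨0, by omega⟩ := by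
  obtain ⟨⟨j, c⟩, h⟩ := τ.symm.surjective ⟨0, by omega⟩
  refine ⟨j, le_antisymm ?_ (Fin.le_def.2 (Nat.zero_le _))⟩
  rw [← h, firstArrival]
  fin_cases c
  · exact min_le_left _ _
  · exact min_le_right _ _

/-- The inserted arrivals come before all others iff they take the positions `0` and `1`; in the
encoding of `insertPos` these are `(p, q) = (0, 0)` and `(p, q) = (1, 0)`. -/
theorem exists_firstArrival_le_iff (n : ℕ) (hn : 0 < n) (p : Fin (2 * n + 2)) (q : Fin (2 * n + 1))
    (τ : Fin (2 * n) ≃ Fin n × Fin 2) :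
    (∃ j, p.succAbove (q.succAbove (firstArrival n τ j)) ≤ max p (p.succAbove q)) ↔
      (p, q) ∉ ({(0, 0), (1, 0)} : Finset (Fin (2 * n + 2) × Fin (2 * n + 1))) := by
  have hmem : (p, q) ∉ ({(0, 0), (1, 0)} : Finset (Fin (2 * n + 2) × Fin (2 * n + 1))) ↔
      ¬ ((q : ℕ) = 0 ∧ (p : ℕ) ≤ 1) := by
    have h1 : ((1 : Fin (2 * n + 2)) : ℕ) = 1 := rfl
    simp only [Finset.mem_insert, Finset.mem_singleton, Prod.mk.injEq, Fin.ext_iff, h1,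
      Fin.val_zero]
    omega
  rw [hmem]
  constructor
  · rintro ⟨j, hj⟩ ⟨hq, hp⟩
    simp only [Fin.succAbove, Fin.lt_def, Fin.le_def, le_max_iff] at hj
    split_ifs at hj <;> simp only [Fin.val_castSucc, Fin.val_succ] at * <;> omega
  · intro h
    obtain ⟨j, hj⟩ := exists_firstArrival_eq_zero n hn τ
    refine ⟨j, ?_⟩
    rw [hj]
    simp only [Fin.succAbove, Fin.lt_def, Fin.le_def, le_max_iff]
    split_ifs <;> simp at * <;> omega

theorem noWaitWins_insertWorst (n : ℕ) (hn : 0 < n) (x) :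
    NoWaitWins (n + 1) n.succ_pos (insertWorst n x) ↔
      x.1 ∉ ({(0, 0), (1, 0)} : Finset (Fin (2 * n + 2) × Fin (2 * n + 1))) ∧
        NoWaitWins n hn x.2 := by
  obtain ⟨⟨p, q⟩, τ⟩ := x
  rw [noWaitWins_iff, noWaitWins_iff, ← exists_firstArrival_le_iff n hn p q τ, Fin.forall_fin_succ',
    and_comm]
  refine and_congr ?_ (forall_congr' fun j => imp_congr ?_ ?_)
  · have h : Fin.last n ≠ ⟨0, n.succ_pos⟩ := by
      simp [Fin.ext_iff]; omega
    simp only [ne_eq, h, not_false_eq_true, forall_const, Fin.exists_fin_succ',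
      Fin.castSucc_lt_last, true_and, lt_irrefl, false_and, or_false, firstArrival_insertWorst,
      secondArrival_insertWorst_last]
  · simp [Fin.ext_iff]
  · have h : ¬ Fin.last n < j.castSucc := not_lt.2 (Fin.le_last _)
    simp [Fin.exists_fin_succ', h, firstArrival_insertWorst, secondArrival_insertWorst,
      (Fin.strictMono_succAbove _).le_iff_le]

theorem card_wins_succ (n : ℕ) (hn : 0 < n) :
    Nat.card {σ // NoWaitWins (n + 1) n.succ_pos σ} =
      ((2 * n + 2) * (2 * n + 1) - 2) * Nat.card {σ // NoWaitWins n hn σ} := by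
  have e : {σ // NoWaitWins (n + 1) n.succ_pos σ} ≃
      {x // x ∉ ({(0, 0), (1, 0)} : Finset (Fin (2 * n + 2) × Fin (2 * n + 1)))} ×
        {τ // NoWaitWins n hn τ} :=
    ((Equiv.ofBijective _ (insertWorst_bijective n)).subtypeEquiv
      fun x => (noWaitWins_insertWorst n hn x).symm).symm.trans
        (Equiv.subtypeProdEquivProd
          (p := fun x => x ∉ ({(0, 0), (1, 0)} : Finset (Fin (2 * n + 2) × Fin (2 * n + 1))))
          (q := fun τ => NoWaitWins n hn τ))
  rw [Nat.card_congr e, Nat.card_prod]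
  congr 1
  rw [Nat.card_eq_fintype_card, Fintype.card_subtype_compl, Fintype.card_coe,
    Finset.card_pair (by simp)]
  simp

theorem card_wins (n : ℕ) (hn : 1 ≤ n) :
    Nat.card {σ // NoWaitWins n hn σ} * (3 * n) = (2 * n + 1) * (2 * n).factorial := by
  induction n, hn using Nat.le_induction with
  | base =>
    have h : ∀ σ, NoWaitWins 1 one_pos σ := fun σ j hj => absurd (Subsingleton.elim _ _) hj
    rw [Nat.card_congr (Equiv.subtypeUnivEquiv h), Nat.card_eq_fintype_card, card_orders]
    rfl
  | succ n hn ih =>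
    rw [card_wins_succ n hn, show 2 * (n + 1) = 2 * n + 1 + 1 by ring, Nat.factorial_succ, Nat.factorial_succ]
    have : (2 * n + 2) * (2 * n + 1) - 2 = 2 * n * (2 * n + 3) := by
      apply Nat.sub_eq_of_eq_add
      ring
    rw [this]
    linear_combination (2 * n + 3) * (2 * n + 2) * ih

/-- **The returning secretary, no-waiting rule.** For `n ≥ 1` secretaries, each arriving
twice with the `2n` arrival events in uniformly random order, the probability that the
no-waiting algorithm hires the best secretary is exactly `(2n+1)/(3n)`. -/
theorem returning_secretary_no_waiting_prob (n : ℕ) (hn : 1 ≤ n) :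
    (Nat.card {σ : Fin (2 * n) ≃ Fin n × Fin 2 // NoWaitWins n hn σ} : ℚ) /
      (Nat.card (Fin (2 * n) ≃ Fin n × Fin 2) : ℚ) = (2 * n + 1) / (3 * n) := by
  have hn' : (3 * n : ℚ) ≠ 0 := by positivity
  rw [Nat.card_eq_fintype_card (α := Fin (2 * n) ≃ Fin n × Fin 2), card_orders,
    div_eq_div_iff (by positivity) hn']
  exact_mod_cast card_wins n hn
end

section
/- Let M be a matroid on a finite ground set E with an injective weight function w : E → ℝ, and let E' ⊆ E. Let S = {e_1, …, e_ℓ} be the output of the greedy algorithm on E' (scan the elements of E' in order of decreasing weight, adding an element whenever independence is preserved), listed so that w(e_1) > w(e_2) > … > w(e_ℓ), and let I = {f_1, …, f_k} be any independent subset of E' listed so that w(f_1) > … > w(f_k). Then ℓ ≥ k and w(e_i) ≥ w(f_i) for every 1 ≤ i ≤ k. -/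
/-!
Every element of `E'` heavier than a threshold `c` is spanned by the elements of `S` heavier
than `c`: it either belongs to `S` or is spanned by the even heavier elements of `S`
(`mem_closure_heavy_of_greedy`). An independent set contained in the span of an independent set
`T` has at most `|T|` elements (`encard_le_of_subset_closure`). With `T = S` this gives `k ≤ ℓ`.
If `w (e_i) < w (f_i)` for some `i`, the threshold `c = w (e_i)` contradicts this bound: the
elements of `I` heavier than `c` include `f_1, …, f_i`, while the elements of `S` heavier than
`c` are among `e_1, …, e_{i-1}`.
-/

theorem encard_le_of_subset_closure {α : Type*} {M : Matroid α} {J T : Set α}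
    (hJ : M.Indep J) (hT : M.Indep T) (h : J ⊆ M.closure T) : J.encard ≤ T.encard := by
  rw [← hT.eRk_eq_encard, ← M.eRk_closure_eq T]
  exact hJ.encard_le_eRk_of_subset h

theorem mem_closure_heavy_of_greedy {α : Type*} {M : Matroid α} {w : α → ℝ} {E' S : Set α}
    (hE' : E' ⊆ M.E) (hSind : M.Indep S)
    (hgreedy : ∀ e ∈ E' \ S, ¬ M.Indep (insert e {f ∈ S | w e < w f}))
    {c : ℝ} {e : α} (he : e ∈ E') (hc : c < w e) : e ∈ M.closure {f ∈ S | c < w f} := by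
  have hind : ∀ d : ℝ, M.Indep {f ∈ S | d < w f} := fun d => hSind.subset (Set.sep_subset _ _)
  by_cases heS : e ∈ S
  · exact M.mem_closure_of_mem ⟨heS, hc⟩ (hind c).subset_ground
  · have hsub : {f ∈ S | w e < w f} ⊆ {f ∈ S | c < w f} := fun f hf => ⟨hf.1, hc.trans hf.2⟩
    refine M.closure_subset_closure hsub ((hind (w e)).mem_closure_iff.2 (Or.inl ?_))
    exact ⟨hgreedy e ⟨he, heS⟩, Set.insert_subset (hE' he) (hind (w e)).subset_ground⟩


/-- **Greedy dominates every independent set, elementwise.** Let `M` be a matroid on a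
finite ground set with an injective weight function `w`, and let `E' ⊆ M.E`.  Let `S` be
the output of the greedy algorithm on `E'`, characterized order-independently by: `S ⊆ E'`
is independent and for every `e ∈ E' \ S` the set `{f ∈ S : w f > w e} ∪ {e}` is
dependent.  Let `I ⊆ E'` be any independent set.  If `S = {e_1, …, e_ℓ}` and
`I = {f_1, …, f_k}` are listed in strictly decreasing order of weight, then `ℓ ≥ k` and
`w (e_i) ≥ w (f_i)` for every `i < k`. -/
theorem greedy_dominates_independent_set {α : Type*} (M : Matroid α) (hfin : M.E.Finite)
    (w : α → ℝ) (hw : Set.InjOn w M.E)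
    (E' : Set α) (hE' : E' ⊆ M.E)
    (S I : Set α)
    (hSind : M.Indep S) (hSE : S ⊆ E')
    (hgreedy : ∀ e ∈ E' \ S, ¬ M.Indep (insert e {f ∈ S | w e < w f}))
    (hIind : M.Indep I) (hIE : I ⊆ E')
    (ℓ k : ℕ) (es : Fin ℓ → α) (fs : Fin k → α)
    (hesinj : Function.Injective es) (hfsinj : Function.Injective fs)
    (hesS : Set.range es = S) (hfsI : Set.range fs = I)
    (hesdec : ∀ i j : Fin ℓ, i < j → w (es j) < w (es i))
    (hfsdec : ∀ i j : Fin k, i < j → w (fs j) < w (fs i)) :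
    k ≤ ℓ ∧ ∀ (i : ℕ) (hik : i < k) (hil : i < ℓ), w (fs ⟨i, hik⟩) ≤ w (es ⟨i, hil⟩) := by
  subst hesS hfsI
  constructor
  · have h := encard_le_of_subset_closure hIind hSind fun e he =>
      M.closure_subset_closure (Set.sep_subset _ _)
        (mem_closure_heavy_of_greedy hE' hSind hgreedy (hIE he) (sub_one_lt (w e)))
    rw [← Set.image_univ, ← Set.image_univ, hfsinj.encard_image, hesinj.encard_image] at h
    simpa using h
  · intro i hik hil
    by_contra! hlt
    have hfs : fs '' Set.Iic ⟨i, hik⟩ ⊆ M.closure {f ∈ Set.range es | w (es ⟨i, hil⟩) < w f} := by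
      rintro _ ⟨j, hj, rfl⟩
      refine mem_closure_heavy_of_greedy hE' hSind hgreedy (hIE ⟨j, rfl⟩) ?_
      rcases (Set.mem_Iic.1 hj).eq_or_lt with rfl | hj
      · exact hlt
      · exact hlt.trans (hfsdec _ _ hj)
    have hes : {f ∈ Set.range es | w (es ⟨i, hil⟩) < w f} ⊆ es '' Set.Iio ⟨i, hil⟩ := by
      rintro _ ⟨⟨j, rfl⟩, hj⟩
      refine ⟨j, ?_, rfl⟩
      by_contra hji
      rcases (not_lt.1 (Set.mem_Iio.not.1 hji)).eq_or_lt with rfl | h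
      · exact lt_irrefl _ hj
      · exact lt_asymm hj (hesdec _ _ h)
    have h := (encard_le_of_subset_closure (hIind.subset (Set.image_subset_range _ _))
      (hSind.subset (Set.sep_subset _ _)) hfs).trans (Set.encard_le_encard hes)
    -- The two index sets have `i + 1` and `i` elements, since indices start at `0`.
    rw [hfsinj.encard_image, hesinj.encard_image, ← Finset.coe_Iic, ← Finset.coe_Iio,
      Set.encard_coe_eq_coe_finsetCard, Set.encard_coe_eq_coe_finsetCard, Fin.card_Iic,
      Fin.card_Iio, Nat.cast_le] at h
    exact Nat.not_succ_le_self i h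
end

section
/- For every x ∈ [0,1), g(x) ≤ 0.768, where g(x) = 2x − (4/3)x² − (1/3)(1−x)²·ln(1−x²). -/
/-! The only transcendental term is `-log (1 - x²)`. Since `log` lies below its tangent lines,
`-log y ≤ c + y₀ / y - 1` whenever `-log y₀ ≤ c`. Taking `y₀ = 8/17`, close to the value of
`1 - x²` at the maximiser `x ≈ 0.7274` of the left-hand side, and `c = 0.754`, the quotient
`(1 - x)² / (1 - x²)` simplifies to `(1 - x) / (1 + x)`, and clearing the denominator `1 + x`
leaves a cubic inequality on `[0, 1)`. The tangent bound is sharp enough there because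
the loss is of second order at the maximiser. -/

/-- The truncated exponential series at `0.754` already exceeds `17/8`. -/
lemma log_seventeen_eighths_le : Real.log (17 / 8) ≤ 0.754 := by
  rw [Real.log_le_iff_le_exp (by norm_num)]
  refine le_trans ?_ (Real.sum_le_exp_of_nonneg (by norm_num) 8)
  norm_num [Finset.sum_range_succ, Nat.factorial]

/-- The tangent-line bound for `log` in the variable `1 / y`, at `y = 8/17`. -/
lemma neg_log_le {y : ℝ} (hy : 0 < y) : -Real.log y ≤ 0.754 + 8 / 17 / y - 1 := by
  have h := Real.log_le_sub_one_of_pos (show 0 < 8 / 17 / y by positivity)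
  have h8 : Real.log (8 / 17) = -Real.log (17 / 8) := by
    rw [← Real.log_inv]; norm_num
  rw [Real.log_div (by norm_num) hy.ne', h8] at h
  linarith [log_seventeen_eighths_le]


/-- **Upper bound on the asymptotic winning probability.** For every `x ∈ [0,1)`,
`g(x) ≤ 0.768`, where `g(x) = 2x − (4/3)x² − (1/3)(1−x)²·ln(1−x²)` is the asymptotic
winning probability of the returning-secretary algorithm with waiting threshold
`μ = 1 − x`. -/
theorem winning_prob_le :
    ∀ x ∈ Set.Ico (0 : ℝ) 1,
      2 * x - 4 / 3 * x ^ 2 - 1 / 3 * (1 - x) ^ 2 * Real.log (1 - x ^ 2) ≤ 0.768 := by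
  rintro x ⟨h0, h1⟩
  have hy : 0 < 1 - x ^ 2 := by nlinarith
  have h := mul_le_mul_of_nonneg_left (neg_log_le hy) (sq_nonneg (1 - x))
  have e : (1 - x) ^ 2 * (0.754 + 8 / 17 / (1 - x ^ 2) - 1)
      = (1 - x) ^ 2 * (0.754 - 1) + 8 / 17 * ((1 - x) / (1 + x)) := by
    have h2 : 1 + x ≠ 0 := by positivity
    have h3 : 1 - x ≠ 0 := by linarith
    rw [show 1 - x ^ 2 = (1 - x) * (1 + x) by ring]
    field_simp
    ring
  rw [e] at h
  have key : (1 - x) / (1 + x)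
      ≤ 17 / 8 * (3 * (0.768 - 2 * x + 4 / 3 * x ^ 2) - (1 - x) ^ 2 * (0.754 - 1)) := by
    rw [div_le_iff₀ (by positivity)]
    -- The cubic nearly has a double root at the maximiser `x ≈ 0.7274`.
    nlinarith [mul_nonneg h0 (sq_nonneg (x - 0.7274)), sq_nonneg (x - 0.7274)]
  linarith
end

section
/- Let n ≥ 2 and k ≥ 1, and consider a uniformly random permutation of kn arrival events, k arrivals per secretary for each of n secretaries; let s denote the best secretary. The probability that there exists a secretary a ≠ s all of whose k arrivals occur before all k arrivals of s is at most (n−1)/C(2k,k), and hence at most (n−1)·2^{−k}. -/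
/-!
The core is an injection. Fix a finite set `U` of events and `A ⊆ U`, and call an ordering *good* if
all of `A` comes before all of `U \ A`. For each `S ⊆ U` with `#S = #A`, fix a permutation `π S` of
the events that preserves `U` and carries `A` to `S`. Relabelling a good ordering by `π S` gives an
ordering `τ` in which `S` comes before `U \ S`, so `S` is recovered as the set of the first `#A`
elements of `U` in `τ`, and then the good ordering is recovered by undoing `π S`. Hence
`C(#U, #A)` times the number of good orderings is at most the number of all orderings
(`choose_mul_card_le`).

With `A` the arrivals of a secretary `a` and `U` those of `a` and of the best one, this bounds the
probability for a single `a` by `1 / C(2k, k)`; a union bound over the `n - 1` choices of `a`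
and `2 ^ k ≤ C(2k, k)` finish the argument.
-/

/-- Two subsets of `U` of equal size are related by a permutation preserving `U`. -/
lemma exists_perm_of_card_eq {α : Type*} [Fintype α] [DecidableEq α] (U A S : Finset α)
    (hA : A ⊆ U) (hS : S ⊆ U) (h : S.card = A.card) :
    ∃ π : Equiv.Perm α, (∀ x, π x ∈ S ↔ x ∈ A) ∧ ∀ x, π x ∈ U ↔ x ∈ U := by
  have key : ∀ T : Finset α, T ⊆ U → Fintype.card {x : U // (x : α) ∈ T} = T.card := by
    intro T hT
    rw [← Fintype.card_coe T]
    exact Fintype.card_congr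
      ⟨fun x => ⟨x.1.1, x.2⟩, fun x => ⟨⟨x.1, hT x.2⟩, x.2⟩, fun _ => rfl, fun _ => rfl⟩
  have e : {x : U // (x : α) ∈ A} ≃ {x : U // (x : α) ∈ S} :=
    Fintype.equivOfCardEq (by rw [key A hA, key S hS, h])
  have hU : ∀ x, Equiv.Perm.ofSubtype e.extendSubtype x ∈ U ↔ x ∈ U := fun x =>
    Equiv.Perm.ofSubtype_apply_mem_iff_mem (p := fun x => x ∈ U) _ x
  refine ⟨Equiv.Perm.ofSubtype e.extendSubtype, fun x => ?_, hU⟩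
  by_cases hx : x ∈ U
  · rw [Equiv.Perm.ofSubtype_apply_of_mem (p := fun x => x ∈ U) _ hx]
    constructor
    · intro hs
      by_contra hn
      exact e.extendSubtype_not_mem ⟨x, hx⟩ hn hs
    · intro ha
      exact e.extendSubtype_mem ⟨x, hx⟩ ha
  · exact ⟨fun hs => absurd ((hU x).1 (hS hs)) hx, fun ha => absurd (hA ha) hx⟩

/-- An ordering `τ` has at most one initial segment of each size inside `U`. -/
lemma eq_of_initial {α β : Type*} [DecidableEq α] [LinearOrder β] (τ : α → β)
    {U S T : Finset α} (hS : S ⊆ U) (hT : T ⊆ U) (h : S.card = T.card)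
    (h₁ : ∀ x ∈ S, ∀ y ∈ U, y ∉ S → τ x < τ y) (h₂ : ∀ x ∈ T, ∀ y ∈ U, y ∉ T → τ x < τ y) :
    S = T := by
  by_contra hne
  obtain ⟨x, hx, hx'⟩ := Finset.not_subset.1 fun hs => hne (Finset.eq_of_subset_of_card_le hs h.ge)
  obtain ⟨y, hy, hy'⟩ :=
    Finset.not_subset.1 fun hs => hne (Finset.eq_of_subset_of_card_le hs h.le).symm
  exact lt_asymm (h₁ x hx y (hT hy) hy') (h₂ y hy x (hS hx) hx')

/-- In a uniformly random ordering, `A` comes before `U \ A` with probability at most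
`1 / C(#U, #A)`. -/
lemma choose_mul_card_le {α β : Type*} [Fintype α] [DecidableEq α] [Fintype β] [LinearOrder β]
    (U A : Finset α) (hA : A ⊆ U) :
    U.card.choose A.card *
        Nat.card {σ : β ≃ α // ∀ x ∈ A, ∀ y ∈ U, y ∉ A → σ.symm x < σ.symm y} ≤
      Nat.card (β ≃ α) := by
  have hex : ∀ S : U.powersetCard A.card, ∃ π : Equiv.Perm α,
      (∀ x, π x ∈ S.1 ↔ x ∈ A) ∧ ∀ x, π x ∈ U ↔ x ∈ U := fun S =>
    exists_perm_of_card_eq U A S.1 hA (Finset.mem_powersetCard.1 S.2).1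
      (Finset.mem_powersetCard.1 S.2).2
  choose π hπ hπU using hex
  rw [← Finset.card_powersetCard, ← Nat.card_eq_finsetCard, ← Nat.card_prod]
  refine Nat.card_le_card_of_injective (fun p => p.2.1.trans (π p.1)) ?_
  rintro ⟨S, σ, hσ⟩ ⟨T, ρ, hρ⟩ h
  have h : σ.trans (π S) = ρ.trans (π T) := h
  have hfirst : ∀ (S : U.powersetCard A.card) (σ : β ≃ α),
      (∀ x ∈ A, ∀ y ∈ U, y ∉ A → σ.symm x < σ.symm y) →
      ∀ x ∈ S.1, ∀ y ∈ U, y ∉ S.1 → (σ.trans (π S)).symm x < (σ.trans (π S)).symm y := by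
    intro S σ hσ x hx y hy hyS
    refine hσ _ ((hπ S _).1 ?_) _ ((hπU S _).1 ?_) (mt (hπ S _).2 ?_) <;> simpa
  have hST : S = T := Subtype.ext <| eq_of_initial (σ.trans (π S)).symm
    (Finset.mem_powersetCard.1 S.2).1 (Finset.mem_powersetCard.1 T.2).1
    ((Finset.mem_powersetCard.1 S.2).2.trans (Finset.mem_powersetCard.1 T.2).2.symm)
    (hfirst S σ hσ) (h ▸ hfirst T ρ hρ)
  subst hST
  have : σ = ρ := by
    ext x
    exact (π S).injective (Equiv.congr_fun h x)
  subst this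
  rfl

lemma choose_mul_card_before_le {n k : ℕ} (a s : Fin n) (has : a ≠ s) :
    (2 * k).choose k * Nat.card {σ : Fin (k * n) ≃ Fin n × Fin k //
        ∀ c c' : Fin k, σ.symm (a, c) < σ.symm (s, c')} ≤
      Nat.card (Fin (k * n) ≃ Fin n × Fin k) := by
  have h := choose_mul_card_le (β := Fin (k * n))
    (({a, s} : Finset (Fin n)) ×ˢ (Finset.univ : Finset (Fin k)))
    ({a} ×ˢ Finset.univ) (Finset.product_subset_product_left (by simp))
  rw [Finset.card_product, Finset.card_product, Finset.card_pair has, Finset.card_singleton,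
    Finset.card_univ, Fintype.card_fin, one_mul] at h
  refine le_trans (Nat.mul_le_mul_left _ (Nat.card_mono (Set.toFinite _) ?_)) h
  rintro σ hσ ⟨x, c⟩ hx ⟨y, c'⟩ hy hy'
  simp only [Finset.mem_product, Finset.mem_singleton, Finset.mem_insert, Finset.mem_univ,
    and_true] at hx hy hy'
  obtain rfl := hx
  obtain rfl := hy.resolve_left hy'
  exact hσ c c'

/-- Union bound over the secretaries `a ≠ s`. -/
lemma choose_mul_card_bad_le {n k : ℕ} (s : Fin n) :
    (2 * k).choose k * Nat.card {σ : Fin (k * n) ≃ Fin n × Fin k //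
        ∃ a : Fin n, a ≠ s ∧ ∀ c c' : Fin k, σ.symm (a, c) < σ.symm (s, c')} ≤
      (n - 1) * Nat.card (Fin (k * n) ≃ Fin n × Fin k) := by
  classical
  have hsub : (Finset.univ.filter fun σ : Fin (k * n) ≃ Fin n × Fin k =>
      ∃ a : Fin n, a ≠ s ∧ ∀ c c' : Fin k, σ.symm (a, c) < σ.symm (s, c')) ⊆
      (Finset.univ.erase s).biUnion fun a => Finset.univ.filter fun σ =>
        ∀ c c' : Fin k, σ.symm (a, c) < σ.symm (s, c') := by
    intro σ hσ
    simpa using hσ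
  have h := (Finset.card_le_card hsub).trans Finset.card_biUnion_le
  rw [Nat.card_eq_fintype_card, Fintype.card_subtype]
  calc _ ≤ _ := Nat.mul_le_mul_left _ h
    _ = _ := Finset.mul_sum _ _ _
    _ ≤ ∑ _a ∈ Finset.univ.erase s, Nat.card (Fin (k * n) ≃ Fin n × Fin k) := by
      refine Finset.sum_le_sum fun a ha => ?_
      have := choose_mul_card_before_le (k := k) a s (Finset.ne_of_mem_erase ha)
      rwa [Nat.card_eq_fintype_card, Fintype.card_subtype] at this
    _ = _ := by simp


/-- **Union bound for the bad event in the `k`-returning secretary problem.** With `n ≥ 2`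
secretaries (ranked by index, index `0` being the best secretary `s`), each having `k ≥ 1`
arrival events, and the `k*n` arrivals arranged in a uniformly random order (encoded by
`σ : Fin (k*n) ≃ Fin n × Fin k`), the probability that there exists a secretary `a ≠ s`
all of whose `k` arrivals occur before all `k` arrivals of `s` is at most
`(n−1)/C(2k,k)`, and hence at most `(n−1)·2^{−k}`. -/
theorem prob_bad_event_le (n k : ℕ) (hn : 2 ≤ n) (hk : 1 ≤ k) :
    (Nat.card {σ : Fin (k * n) ≃ Fin n × Fin k //
          ∃ a : Fin n, a ≠ ⟨0, by omega⟩ ∧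
            ∀ c c' : Fin k, σ.symm (a, c) < σ.symm (⟨0, by omega⟩, c')} : ℚ) /
        (Nat.card (Fin (k * n) ≃ Fin n × Fin k) : ℚ) ≤
      ((n : ℚ) - 1) / ((2 * k).choose k : ℚ) ∧
    (Nat.card {σ : Fin (k * n) ≃ Fin n × Fin k //
          ∃ a : Fin n, a ≠ ⟨0, by omega⟩ ∧
            ∀ c c' : Fin k, σ.symm (a, c) < σ.symm (⟨0, by omega⟩, c')} : ℚ) /
        (Nat.card (Fin (k * n) ≃ Fin n × Fin k) : ℚ) ≤
      ((n : ℚ) - 1) / 2 ^ k := by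
  have hchoose : 2 ^ k ≤ (2 * k).choose k := by
    clear hk
    induction k with
    | zero => simp
    | succ k ih =>
      -- `(k + 1) * C(2k+2, k+1) = 2 * (2k + 1) * C(2k, k)`, so the ratio is at least `2`.
      have h := Nat.succ_mul_centralBinom_succ k
      simp only [Nat.centralBinom] at h
      have : (k + 1) * 2 ^ (k + 1) ≤ (k + 1) * (2 * (k + 1)).choose (k + 1) := by
        rw [h, pow_succ]
        nlinarith [Nat.mul_le_mul_left (2 * (k + 1)) ih, Nat.zero_le (k * (2 * k).choose k)]
      exact Nat.le_of_mul_le_mul_left this k.succ_pos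
  have hn1 : (0 : ℚ) ≤ (n : ℚ) - 1 := by
    have : (2 : ℚ) ≤ n := by exact_mod_cast hn
    linarith
  have hcq : (2 : ℚ) ^ k ≤ ((2 * k).choose k : ℚ) := by exact_mod_cast hchoose
  have hpow : (0 : ℚ) < 2 ^ k := by positivity
  have hfirst := choose_mul_card_bad_le (k := k) (⟨0, by omega⟩ : Fin n)
  have htot : 0 < Nat.card (Fin (k * n) ≃ Fin n × Fin k) :=
    have : Nonempty (Fin (k * n) ≃ Fin n × Fin k) :=
      ⟨Fintype.equivOfCardEq (by simp [mul_comm])⟩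
    Nat.card_pos
  refine (fun h => ⟨h, h.trans (div_le_div_of_nonneg_left hn1 hpow hcq)⟩) ?_
  rw [div_le_div_iff₀ (by exact_mod_cast htot) (hpow.trans_le hcq), mul_comm]
  have hq : (((2 * k).choose k * _ : ℕ) : ℚ) ≤ ((n - 1) * _ : ℕ) := Nat.cast_le.2 hfirst
  rw [Nat.cast_mul, Nat.cast_mul, Nat.cast_sub (by omega), Nat.cast_one] at hq
  exact hq
end

section
/- For every real α > 0 there exists a constant c > 0 such that for all n ≥ 2, taking k = ⌈c · log n⌉, the following holds: with k arrivals per secretary for each of n secretaries, arranged in a uniformly random order of all kn arrival events, the probability that there exists a secretary a other than the best secretary s all of whose k arrivals occur before all k arrivals of s is at most 1/n^α. Consequently, the no-waiting k-returning algorithm hires the best secretary with probability at least 1 − 1/n^α. -/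
/-!
Fix a secretary `a ≠ s`. For `S ⊆ Fin k`, exchanging the `c`-th arrival of `a` with the `c`-th
arrival of `s` for every `c ∈ S` sends an order in which all of `a` precedes all of `s` to an order
from which `S` can be read off: `c ∈ S` exactly when the `c`-th arrival of `s` now comes before the
`c`-th arrival of `a`. So each bad order for `a` accounts for `2 ^ k` orders, with no overlaps, and
remembering `a` as well turns this into an injection (`two_pow_mul_card_bad_le`) showing that the
probability of a bad order is at most `n / 2 ^ k`. With `c = (α + 1) / log 2` we have
`2 ^ k ≥ n ^ (α + 1)`, which is the first bound. The algorithm can fail only on a bad order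
(`card_le_card_wins_add_card_bad`), which gives the second.
-/

/-- The no-waiting `k`-returning algorithm wins: secretaries are ranked by their index
(index `0` being the best secretary `s`).  The arrival order of the `k*n` arrival events
is encoded by `σ : Fin (k*n) ≃ Fin n × Fin k`, mapping positions to (secretary, copy).
The algorithm maintains as candidate the best secretary seen so far and hires a secretary
at his last arrival if he is then the candidate; it hires the best secretary iff for every
secretary `j ≠ s` it is not the case that all arrivals of `j` precede all arrivals of `s`
while `j` is the best among all secretaries having had an arrival up to `j`'s last
arrival (some arrival of `i` occurs no later than some arrival of `j` iff `i`'s first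
arrival is no later than `j`'s last arrival). -/
def KReturningWins (n k : ℕ) (hn : 0 < n) (σ : Fin (k * n) ≃ Fin n × Fin k) : Prop :=
  ∀ j : Fin n, j ≠ ⟨0, hn⟩ →
    ¬ ((∀ c c' : Fin k, σ.symm (j, c) < σ.symm (⟨0, hn⟩, c')) ∧
        ∀ i : Fin n, (∃ c c' : Fin k, σ.symm (i, c) ≤ σ.symm (j, c')) → j ≤ i)

/-- Exchange the `c`-th arrivals of `a` and `s` for every `c ∈ S`. -/
def swapOn {n k : ℕ} (a s : Fin n) (S : Finset (Fin k)) : Fin n × Fin k ≃ Fin n × Fin k :=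
  Equiv.prodCongrLeft fun c => if c ∈ S then Equiv.swap a s else 1

lemma mem_iff_of_swapOn {n k : ℕ} {X : Type*} [Preorder X] {a s : Fin n}
    {σ : X ≃ Fin n × Fin k} (h : ∀ c c' : Fin k, σ.symm (a, c) < σ.symm (s, c'))
    (S : Finset (Fin k)) (c : Fin k) :
    c ∈ S ↔ (σ.trans (swapOn a s S).symm).symm (s, c) <
      (σ.trans (swapOn a s S).symm).symm (a, c) := by
  by_cases hc : c ∈ S
  · simpa [swapOn, hc] using h c c
  · simpa [swapOn, hc] using (h c c).not_gt

/-- The union bound and the bound `2 ^ (-k)` for a single competitor in one counting inequality: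
a bad order together with `S` is recovered from a competitor `a` and the order modified by
`swapOn a s S`. -/
lemma two_pow_mul_card_bad_le (n k : ℕ) (s : Fin n) :
    2 ^ k * Nat.card {σ : Fin (k * n) ≃ Fin n × Fin k //
        ∃ a : Fin n, a ≠ s ∧ ∀ c c' : Fin k, σ.symm (a, c) < σ.symm (s, c')} ≤
      n * Nat.card (Fin (k * n) ≃ Fin n × Fin k) := by
  set B := {σ : Fin (k * n) ≃ Fin n × Fin k //
        ∃ a : Fin n, a ≠ s ∧ ∀ c c' : Fin k, σ.symm (a, c) < σ.symm (s, c')} with hB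
  choose a _ ha using fun σ : B => σ.2
  have key : Function.Injective (fun p : Finset (Fin k) × B =>
      (a p.2, p.2.1.trans (swapOn (a p.2) s p.1).symm)) := by
    rintro ⟨S, σ⟩ ⟨T, τ⟩ h
    obtain ⟨h1, h2⟩ := Prod.mk.inj h
    have hST : S = T := by
      ext c
      have e1 := mem_iff_of_swapOn (ha σ) S c
      have e2 := mem_iff_of_swapOn (ha τ) T c
      simp only at h1 h2
      rw [h2, h1] at e1
      exact e1.trans e2.symm
    subst hST
    simp only at h1 h2
    rw [h1] at h2
    have h3 : σ = τ := by
      apply Subtype.ext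
      ext1 x
      exact (swapOn (a τ) s S).symm.injective (DFunLike.congr_fun h2 x)
    rw [h3]
  simpa [Nat.card_prod] using Nat.card_le_card_of_injective _ key

lemma card_le_card_wins_add_card_bad (n k : ℕ) (hn : 0 < n) :
    Nat.card (Fin (k * n) ≃ Fin n × Fin k) ≤
      Nat.card {σ : Fin (k * n) ≃ Fin n × Fin k // KReturningWins n k hn σ} +
      Nat.card {σ : Fin (k * n) ≃ Fin n × Fin k //
        ∃ a : Fin n, a ≠ ⟨0, hn⟩ ∧ ∀ c c' : Fin k, σ.symm (a, c) < σ.symm (⟨0, hn⟩, c')} := by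
  classical
  simp only [Nat.card_eq_fintype_card, Fintype.card_subtype]
  rw [← Finset.card_univ]
  refine (Finset.card_le_card fun σ _ => ?_).trans (Finset.card_union_le _ _)
  simp only [Finset.mem_union, Finset.mem_filter, Finset.mem_univ, true_and]
  by_contra! h
  exact h.1 fun j hj hw => by
    obtain ⟨c, c', hc⟩ := h.2 j hj
    exact absurd (hw.1 c c') (not_lt.2 hc)

lemma div_two_pow_le (α : ℝ) (n k : ℕ) (hn : 2 ≤ n)
    (hk : (α + 1) / Real.log 2 * Real.log n ≤ k) : (n : ℝ) / 2 ^ k ≤ 1 / (n : ℝ) ^ α := by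
  have hn0 : (0 : ℝ) < n := by positivity
  have hl : 0 < Real.log 2 := Real.log_pos one_lt_two
  rw [div_le_div_iff₀ (by positivity) (by positivity), one_mul, mul_comm,
    ← Real.rpow_add_one hn0.ne', ← Real.rpow_natCast, Real.rpow_def_of_pos hn0,
    Real.rpow_def_of_pos two_pos, Real.exp_le_exp]
  calc Real.log n * (α + 1) = Real.log 2 * ((α + 1) / Real.log 2 * Real.log n) := by
        field_simp
    _ ≤ _ := by gcongr

/-- **The `Θ(log n)`-returning secretary.** For every real `α > 0` there is a constant
`c > 0` such that for all `n ≥ 2`, taking `k = ⌈c·log n⌉`: with `k` arrivals per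
secretary for each of `n` secretaries arranged in uniformly random order, the probability
that some secretary `a` other than the best secretary `s` (index `0`) has all `k` of its
arrivals before all `k` arrivals of `s` is at most `1/n^α`; consequently the no-waiting
`k`-returning algorithm hires the best secretary with probability at least `1 − 1/n^α`. -/
theorem log_returning_secretary (α : ℝ) (hα : 0 < α) :
    ∃ c : ℝ, 0 < c ∧ ∀ n : ℕ, (hn : 2 ≤ n) →
      ((Nat.card {σ : Fin (⌈c * Real.log n⌉₊ * n) ≃ Fin n × Fin ⌈c * Real.log n⌉₊ //
            ∃ a : Fin n, a ≠ ⟨0, by omega⟩ ∧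
              ∀ cc cc' : Fin ⌈c * Real.log n⌉₊,
                σ.symm (a, cc) < σ.symm (⟨0, by omega⟩, cc')} : ℝ) /
          (Nat.card (Fin (⌈c * Real.log n⌉₊ * n) ≃ Fin n × Fin ⌈c * Real.log n⌉₊) : ℝ) ≤
        1 / (n : ℝ) ^ α) ∧
      (1 - 1 / (n : ℝ) ^ α ≤
        (Nat.card {σ : Fin (⌈c * Real.log n⌉₊ * n) ≃ Fin n × Fin ⌈c * Real.log n⌉₊ //
            KReturningWins n ⌈c * Real.log n⌉₊ (by omega) σ} : ℝ) /
          (Nat.card (Fin (⌈c * Real.log n⌉₊ * n) ≃ Fin n × Fin ⌈c * Real.log n⌉₊) : ℝ)) := by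
  refine ⟨(α + 1) / Real.log 2, div_pos (by linarith) (Real.log_pos one_lt_two), fun n hn => ?_⟩
  have hk := Nat.le_ceil ((α + 1) / Real.log 2 * Real.log n)
  generalize ⌈(α + 1) / Real.log 2 * Real.log n⌉₊ = k at hk ⊢
  have h0 := div_two_pow_le α n k hn hk
  have h1 := two_pow_mul_card_bad_le n k ⟨0, by omega⟩
  have h2 := card_le_card_wins_add_card_bad n k (by omega)
  have hT : 0 < Nat.card (Fin (k * n) ≃ Fin n × Fin k) := by
    have : Nonempty (Fin (k * n) ≃ Fin n × Fin k) :=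
      ⟨(finCongr (mul_comm k n)).trans finProdFinEquiv.symm⟩
    exact Nat.card_pos
  generalize Nat.card (Fin (k * n) ≃ Fin n × Fin k) = T at *
  generalize Nat.card {σ : Fin (k * n) ≃ Fin n × Fin k // ∃ a : Fin n, a ≠ ⟨0, _⟩ ∧
    ∀ c c' : Fin k, σ.symm (a, c) < σ.symm (⟨0, _⟩, c')} = B at *
  generalize Nat.card {σ : Fin (k * n) ≃ Fin n × Fin k // KReturningWins n k _ σ} = W at *
  have hT' : (0 : ℝ) < T := by exact_mod_cast hT
  have h1' : (2 : ℝ) ^ k * B ≤ n * T := by exact_mod_cast h1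
  have h2' : (T : ℝ) ≤ W + B := by exact_mod_cast h2
  have hb : (B : ℝ) / T ≤ 1 / (n : ℝ) ^ α := by
    refine le_trans ?_ h0
    rw [div_le_div_iff₀ hT' (by positivity)]
    linarith
  refine ⟨hb, ?_⟩
  have : (1 : ℝ) ≤ W / T + B / T := by
    rw [← add_div, le_div_iff₀ hT']
    linarith
  linarith
end

section
/- The sequence P(n) = 1/n + ((3n−3)/(3n))·(3/(3n−1)) + ((3n−3)/(3n))·((3n−4)/(3n−1))·(3/(3n−2)) + ∑_{i=4}^{3n−3} (3n−i)(3n−i−1)(3n−i−2)(3n+i−9) / (n(3n−1)(3n−2)(3n−4)(3n−5)) converges to 9/10 as n → ∞. -/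
/-!
Put `N = 3n` and `j = N - i`. The numerator of the `i`-th summand is
`j(j-1)(j-2)(2N-9-j) = (2N-12) j(j-1)(j-2) - j(j-1)(j-2)(j-3)`, a combination of falling factorials,
so the sum over `j = 3, …, N-4` telescopes to `(N-3)(N-4)(N-5)(N-6)(3N-16)/10`.
After cancellation the sum in `P(n)` is `(N-3)(N-6)(3N-16) / (10 n (N-1)(N-2))`, and `P(n)` becomes
a rational function of `u = 1/n` that is continuous at `u = 0` with value `9/10` there.
-/

open Filter

/-- Partial sums of the numerators, telescoped with respect to the discrete antiderivative
`J ↦ (2x-12) J(J-1)(J-2)(J-3)/4 - J(J-1)(J-2)(J-3)(J-4)/5` evaluated at `J = x - 3` and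
`J = x - 3 - k`. -/
lemma sum_numerator (x : ℝ) (k : ℕ) :
    ∑ i ∈ Finset.Icc 4 (k + 3),
        (x - (i : ℝ)) * (x - (i : ℝ) - 1) * (x - (i : ℝ) - 2) * (x + (i : ℝ) - 9) =
      ((2 * x - 12) * ((x - 3) * (x - 4) * (x - 5) * (x - 6)) / 4 -
        (x - 3) * (x - 4) * (x - 5) * (x - 6) * (x - 7) / 5) -
      ((2 * x - 12) * ((x - 3 - k) * (x - 4 - k) * (x - 5 - k) * (x - 6 - k)) / 4 -
        (x - 3 - k) * (x - 4 - k) * (x - 5 - k) * (x - 6 - k) * (x - 7 - k) / 5) := by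
  induction k with
  | zero => simp
  | succ k ih =>
    rw [show k + 1 + 3 = (k + 3) + 1 by ring, Finset.sum_Icc_succ_top (by omega), ih]
    push_cast
    ring

lemma sum_numerator_full (n : ℕ) (hn : 2 ≤ n) :
    ∑ i ∈ Finset.Icc 4 (3 * n - 3),
        (3 * (n : ℝ) - (i : ℝ)) * (3 * (n : ℝ) - (i : ℝ) - 1) *
          (3 * (n : ℝ) - (i : ℝ) - 2) * (3 * (n : ℝ) + (i : ℝ) - 9) =
      (3 * (n : ℝ) - 3) * (3 * n - 4) * (3 * n - 5) * (3 * n - 6) * (9 * n - 16) / 10 := by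
  obtain ⟨k, hk⟩ : ∃ k, 3 * n = k + 6 := ⟨3 * n - 6, by omega⟩
  have hk' : (k : ℝ) = 3 * n - 6 := by
    have : ((3 * n : ℕ) : ℝ) = ((k + 6 : ℕ) : ℝ) := by rw [hk]
    push_cast at this
    linarith
  rw [show 3 * n - 3 = k + 3 by omega, sum_numerator, hk']
  ring

/-- **The no-waiting `2`-returning secretary succeeds with probability tending to 9/10.**
The sequence
`P(n) = 1/n + ((3n−3)/(3n))·(3/(3n−1)) + ((3n−3)/(3n))·((3n−4)/(3n−1))·(3/(3n−2))
 + ∑_{i=4}^{3n−3} (3n−i)(3n−i−1)(3n−i−2)(3n+i−9)/(n(3n−1)(3n−2)(3n−4)(3n−5))`,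
the exact winning probability of the no-waiting algorithm when each of `n` secretaries
arrives three times, converges to `9/10` as `n → ∞`. -/
theorem twice_returning_secretary_tendsto_nine_tenths :
    Tendsto (fun n : ℕ =>
        1 / (n : ℝ) +
          (3 * (n : ℝ) - 3) / (3 * (n : ℝ)) * (3 / (3 * (n : ℝ) - 1)) +
          (3 * (n : ℝ) - 3) / (3 * (n : ℝ)) * ((3 * (n : ℝ) - 4) / (3 * (n : ℝ) - 1)) *
            (3 / (3 * (n : ℝ) - 2)) +
          ∑ i ∈ Finset.Icc 4 (3 * n - 3),
            (3 * (n : ℝ) - (i : ℝ)) * (3 * (n : ℝ) - (i : ℝ) - 1) *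
                (3 * (n : ℝ) - (i : ℝ) - 2) * (3 * (n : ℝ) + (i : ℝ) - 9) /
              ((n : ℝ) * (3 * (n : ℝ) - 1) * (3 * (n : ℝ) - 2) * (3 * (n : ℝ) - 4) *
                (3 * (n : ℝ) - 5)))
      atTop (nhds (9 / 10)) := by
  have hu : Tendsto (fun n : ℕ => 1 / (n : ℝ)) atTop (nhds 0) :=
    tendsto_one_div_atTop_nhds_zero_nat
  -- `P(n)` written as a function of `u = 1/n`
  have hf : ContinuousAt (fun u : ℝ => u + (1 - u) * (3 * u / (3 - u)) +
      (1 - u) * ((3 - 4 * u) / (3 - u)) * (3 * u / (3 - 2 * u)) +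
      (3 - 3 * u) * (3 - 6 * u) * (9 - 16 * u) / (10 * (3 - u) * (3 - 2 * u))) 0 := by
    fun_prop (disch := norm_num)
  have hlim := hf.tendsto.comp hu
  norm_num only [mul_zero, sub_zero, zero_div, zero_add] at hlim
  refine hlim.congr' ?_
  filter_upwards [eventually_ge_atTop 2] with n hn
  have hn' : (2 : ℝ) ≤ n := by exact_mod_cast hn
  have h0 : (n : ℝ) ≠ 0 := by linarith
  -- the denominators, in the normal form `field_simp` gives them
  have h1 : (n : ℝ) * 3 - 1 ≠ 0 := by linarith
  have h2 : (n : ℝ) * 3 - 2 ≠ 0 := by linarith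
  have h4 : (n : ℝ) * 3 - 4 ≠ 0 := by linarith
  have h5 : (n : ℝ) * 3 - 5 ≠ 0 := by linarith
  rw [← Finset.sum_div, sum_numerator_full n hn]
  have e1 : 3 - 1 / (n : ℝ) = (3 * n - 1) / n := by field_simp
  have e2 : 3 - 2 * (1 / (n : ℝ)) = (3 * n - 2) / n := by field_simp
  simp only [Function.comp_apply]
  rw [e1, e2]
  field_simp
end

section
/- Let G = (L ∪ R, E) be a bipartite graph with nonnegative edge weights w : E → ℝ≥0 and |L| = n ≥ 1, and let OPT be the maximum weight of a matching in G. For any 1 ≤ m ≤ n, if S is a uniformly random m-element subset of L, then the expected maximum weight of a matching in the induced subgraph G[S ∪ R] is at least (m/n) · OPT. -/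
/-! Fix an optimal matching `M` of the whole graph. For each `S`, the edges of `M` with left
endpoint in `S` form a matching of `G[S ∪ R]`, so its optimum is at least the weight of these
edges (`sum_filter_le_optMatchWeight`). Summing over all `m`-subsets `S` and exchanging the
sums, every edge of `M` is counted once for each `m`-subset containing its left endpoint, that
is `choose (n - 1) (m - 1)` times (`card_powersetCard_filter_mem`), and
`choose (n - 1) (m - 1) / choose n m = m / n`. -/

/-- A set of edges of a bipartite graph (edges given as pairs in `L × R`) is a matching if
no two distinct edges share an endpoint. -/
def IsMatching {L R : Type*} (M : Finset (L × R)) : Prop :=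
  ∀ e ∈ M, ∀ f ∈ M, e ≠ f → e.1 ≠ f.1 ∧ e.2 ≠ f.2

instance {L R : Type*} [DecidableEq L] [DecidableEq R] :
    DecidablePred (IsMatching (L := L) (R := R)) := fun M => by
  unfold IsMatching; infer_instance

/-- The maximum weight of a matching contained in the edge set `E` with edge weights `w`
(the empty matching always exists, so the maximum is over a nonempty collection). -/
noncomputable def optMatchWeight {L R : Type*} [DecidableEq L] [DecidableEq R]
    (E : Finset (L × R)) (w : L × R → ℝ) : ℝ :=
  (E.powerset.filter IsMatching).sup'
    ⟨∅, by simp [Finset.mem_filter, IsMatching]⟩ (fun M => ∑ e ∈ M, w e)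

theorem sum_filter_le_optMatchWeight {L R : Type*} [DecidableEq L] [DecidableEq R]
    (E : Finset (L × R)) (w : L × R → ℝ) (S : Finset L) (M : Finset (L × R))
    (hME : M ⊆ E) (hM : IsMatching M) :
    ∑ e ∈ M with e.1 ∈ S, w e ≤ optMatchWeight (E.filter fun e => e.1 ∈ S) w := by
  unfold optMatchWeight
  refine Finset.le_sup' (fun M : Finset (L × R) => ∑ e ∈ M, w e) ?_
  rw [Finset.mem_filter, Finset.mem_powerset]
  refine ⟨Finset.filter_subset_filter _ hME, fun e he f hf => ?_⟩
  exact hM e (Finset.mem_filter.mp he).1 f (Finset.mem_filter.mp hf).1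

theorem card_powersetCard_filter_mem {L : Type*} [Fintype L] [DecidableEq L] (a : L)
    (n m : ℕ) (hL : Fintype.card L = n + 1) :
    (((Finset.univ : Finset L).powersetCard (m + 1)).filter fun S => a ∈ S).card
      = n.choose m := by
  -- The subsets avoiding `a` are those of `univ.erase a`; conclude by Pascal's rule.
  have h := Finset.card_filter_add_card_filter_not
    (s := (Finset.univ : Finset L).powersetCard (m + 1)) (fun S => a ∈ S)
  have h2 : (((Finset.univ : Finset L).powersetCard (m + 1)).filter fun S => ¬ a ∈ S)
      = (Finset.univ.erase a).powersetCard (m + 1) := by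
    ext S
    simp only [Finset.mem_filter, Finset.mem_powersetCard, Finset.subset_erase]
    tauto
  rw [h2, Finset.card_powersetCard, Finset.card_powersetCard,
    Finset.card_erase_of_mem (Finset.mem_univ a), Finset.card_univ, hL,
    Nat.choose_succ_succ, Nat.add_sub_cancel] at h
  simp only [Nat.succ_eq_add_one] at h
  omega

/-- **Random induced subgraphs retain a proportional share of the optimum matching.** Let
`G = (L ∪ R, E)` be a bipartite graph with nonnegative edge weights `w` and `|L| = n ≥ 1`,
and let `OPT` be the maximum weight of a matching in `G`.  For any `1 ≤ m ≤ n`, if `S` is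
a uniformly random `m`-element subset of `L`, then the expected maximum weight of a
matching in the induced subgraph `G[S ∪ R]` (retaining exactly the edges with left
endpoint in `S`) is at least `(m/n) · OPT`. -/
theorem expected_opt_matching_random_subset {L R : Type*} [Fintype L] [DecidableEq L]
    [DecidableEq R] (E : Finset (L × R)) (w : L × R → ℝ) (hw : ∀ e, 0 ≤ w e)
    (n : ℕ) (hL : Fintype.card L = n) (hn : 1 ≤ n)
    (m : ℕ) (hm1 : 1 ≤ m) (hmn : m ≤ n) :
    (m : ℝ) / (n : ℝ) * optMatchWeight E w ≤
      (∑ S ∈ (Finset.univ : Finset L).powersetCard m,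
          optMatchWeight (E.filter fun e => e.1 ∈ S) w) /
        (((Finset.univ : Finset L).powersetCard m).card : ℝ) := by
  obtain ⟨M, hM, hopt⟩ := Finset.exists_mem_eq_sup'
    (s := E.powerset.filter IsMatching) ⟨∅, by simp [Finset.mem_filter, IsMatching]⟩
    (fun M => ∑ e ∈ M, w e)
  rw [Finset.mem_filter, Finset.mem_powerset] at hM
  change optMatchWeight E w = ∑ e ∈ M, w e at hopt
  obtain ⟨n, rfl⟩ : ∃ k, n = k + 1 := ⟨n - 1, by omega⟩
  obtain ⟨m, rfl⟩ : ∃ k, m = k + 1 := ⟨m - 1, by omega⟩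
  have hcard : ((Finset.univ : Finset L).powersetCard (m + 1)).card
      = (n + 1).choose (m + 1) := by
    rw [Finset.card_powersetCard, Finset.card_univ, hL]
  have hsum : ∑ S ∈ (Finset.univ : Finset L).powersetCard (m + 1),
      ∑ e ∈ M with e.1 ∈ S, w e = (n.choose m : ℝ) * ∑ e ∈ M, w e := by
    simp_rw [Finset.sum_filter]
    rw [Finset.sum_comm, Finset.mul_sum]
    refine Finset.sum_congr rfl fun e _ => ?_
    rw [← Finset.sum_filter, Finset.sum_const, card_powersetCard_filter_mem e.1 n m hL,
      nsmul_eq_mul]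
  have hpos : (0 : ℝ) < ((n + 1).choose (m + 1) : ℝ) := by
    exact_mod_cast Nat.choose_pos hmn
  have hchoose : ((n + 1 : ℕ) : ℝ) * (n.choose m : ℝ)
      = ((n + 1).choose (m + 1) : ℝ) * ((m + 1 : ℕ) : ℝ) := by
    exact_mod_cast Nat.add_one_mul_choose_eq n m
  have hn0 : ((n + 1 : ℕ) : ℝ) ≠ 0 := by positivity
  rw [hcard, le_div_iff₀ hpos, hopt]
  calc ((m + 1 : ℕ) : ℝ) / ((n + 1 : ℕ) : ℝ) * (∑ e ∈ M, w e) * ((n + 1).choose (m + 1) : ℝ)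
      = (n.choose m : ℝ) * ∑ e ∈ M, w e := by
        rw [div_mul_eq_mul_div, div_mul_eq_mul_div, div_eq_iff hn0]
        linear_combination (-(∑ e ∈ M, w e)) * hchoose
    _ = _ := hsum.symm
    _ ≤ _ := Finset.sum_le_sum fun S _ => sum_filter_le_optMatchWeight E w S M hM.1 hM.2
end
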